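/- Let R = 𝔽_2[x]/(x^51 − 1), f_1 = x^24 + x^23 + x^21 + x^19 + x^18 + x^15 + x^14 + x^13 + x^12 + x^11 + x^9 + x^8 + x^6 + x^4 + 1, f_2 = (x^51 − 1)/(x^2 + x + 1), and g = x^50 + x^49 + x^48 + x^46 + x^44 + x^43 + x^42 + x^41 + x^38 + x^37 + x^36 + x^34 + x^32 + x^29 + x^27 + x^25 + x^24 + x^19 + x^17 + x^15 + x^13 + x^12 + x^10 + x^8 + x^5 + x + 1, all regarded in R. Let C = {(c_1, c_1·g + c_2) : c_1 ∈ (f_1), c_2 ∈ (f_2)} ⊆ R^2, where (f_i) denotes the ideal of R generated by f_i. Then, under the coefficient identification R^2 ≅ 𝔽_2^{102}, C is an 𝔽_2-linear code of length 102 and dimension 29 in which every nonzero codeword has Hamming weight at least 28. -/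

import Mathlib

open Polynomial

/-- `R = F[x]/(x^m - 1)` -/
abbrev Rng (F : Type*) [Field F] (m : ℕ) : Type _ := AdjoinRoot (X ^ m - 1 : F[X])

theorem monicXm {F : Type*} [Field F] {m : ℕ} (hm : m ≠ 0) :
    (X ^ m - 1 : F[X]).Monic := by
  simpa using Polynomial.monic_X_pow_sub_C (1 : F) hm

/-- Hamming weight of an element of `R` under the coefficient identification
`R ≅ F^m`: the number of nonzero coefficients of the canonical representative
of degree `< m`. -/
noncomputable def wt {F : Type*} [Field F] {m : ℕ} (hm : m ≠ 0) (r : Rng F m) : ℕ :=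
  (AdjoinRoot.modByMonicHom (monicXm hm) r).support.card

/-- `R`-Hamming weight of a vector over `R`: the number of nonzero coordinates. -/
noncomputable def rwt {R : Type*} [Zero R] {l : ℕ} (v : Fin l → R) : ℕ :=
  Nat.card {j // v j ≠ 0}

noncomputable def f₁ : Rng (ZMod 2) 51 :=
  AdjoinRoot.mk _ (X ^ 24 + X ^ 23 + X ^ 21 + X ^ 19 + X ^ 18 + X ^ 15 + X ^ 14 +
    X ^ 13 + X ^ 12 + X ^ 11 + X ^ 9 + X ^ 8 + X ^ 6 + X ^ 4 + 1)

noncomputable def f₂ : Rng (ZMod 2) 51 :=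
  AdjoinRoot.mk _ ((X ^ 51 - 1) /ₘ (X ^ 2 + X + 1))

noncomputable def g : Rng (ZMod 2) 51 :=
  AdjoinRoot.mk _ (X ^ 50 + X ^ 49 + X ^ 48 + X ^ 46 + X ^ 44 + X ^ 43 + X ^ 42 +
    X ^ 41 + X ^ 38 + X ^ 37 + X ^ 36 + X ^ 34 + X ^ 32 + X ^ 29 + X ^ 27 + X ^ 25 +
    X ^ 24 + X ^ 19 + X ^ 17 + X ^ 15 + X ^ 13 + X ^ 12 + X ^ 10 + X ^ 8 + X ^ 5 +
    X + 1)


namespace S8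

/-- Select the entries of a list according to the binary digits of `a` and xor them. -/
def lcN : ℕ → List ℕ → ℕ
  | _, [] => 0
  | a, x :: xs => bif Nat.beq (Nat.land a 1) 1 then Nat.xor x (lcN (Nat.shiftRight a 1) xs)
      else lcN (Nat.shiftRight a 1) xs

/-- Bit-sliced counter increment. -/
def inc : List ℕ → ℕ → List ℕ
  | [], _ => []
  | s :: ss, b => Nat.xor s b :: inc ss (Nat.land s b)

/-- Bit-sliced counting of the columns given by the masks. -/
def cnt : List ℕ → List ℕ → List ℕ → List ℕ
  | [], _, s => s
  | a :: as, xs, s => cnt as xs (inc s (lcN a xs))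

/-- Positions where the (7-plane) counter is at least 28. -/
def ge28 : List ℕ → ℕ
  | [_, _, s2, s3, s4, s5, s6] => Nat.lor s6 (Nat.lor s5 (Nat.land s4 (Nat.land s3 s2)))
  | _ => 0

def orAll : List ℕ → ℕ
  | [] => 0
  | x :: xs => Nat.lor x (orAll xs)

def ones (l : ℕ) : ℕ := Nat.sub (Nat.shiftLeft 1 l) 1

def merge (l : ℕ) : List ℕ → List ℕ → List ℕ
  | a :: as, b :: bs => Nat.lor a (Nat.shiftLeft b l) :: merge l as bs
  | _, _ => []

/-- Combine two enumerations: new first bit `0` in the first one, `1` in the second. -/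
def combine (c d : List ℕ × ℕ) : List ℕ × ℕ :=
  (Nat.shiftLeft (ones d.2) c.2 :: merge c.2 c.1 d.1, Nat.add c.2 d.2)

def stepAux : List ℕ × ℕ → List (List ℕ × ℕ) → List (List ℕ × ℕ)
  | _, [] => []
  | p, c :: cs => combine c p :: stepAux c cs

def step : List (List ℕ × ℕ) → List (List ℕ × ℕ)
  | [] => []
  | c :: cs => stepAux c (c :: cs)

def rows : ℕ → List (List ℕ × ℕ)
  | 0 => [([], 0), ([], 1), ([], 1), ([], 1), ([], 1), ([], 1), ([], 1), ([], 1)]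
  | n + 1 => step (rows n)

/-- All subsets of a 27-set with at most 6 elements, bit-sliced. -/
def enum : List ℕ × ℕ := (rows 27).getD 7 ([], 0)

def free (b : Bool) (l : ℕ) : ℕ := bif b then ones l else 0

def tabs (x y : Bool) : List ℕ := enum.1 ++ [free x enum.2, free y enum.2]

def check (A : List ℕ) (x y : Bool) : Bool :=
  Nat.beq (Nat.land (orAll (tabs x y)) (ge28 (cnt A (tabs x y) [0, 0, 0, 0, 0, 0, 0])))
    (orAll (tabs x y))

def A1 : List ℕ := [
  1, 2, 4, 8, 16, 32, 64, 128,
  256, 512, 1024, 2048, 4096, 8192, 16384, 32768,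
  65536, 131072, 262144, 524288, 1048576, 2097152, 4194304, 8388608,
  16777216, 33554432, 67108864, 10868343, 21736686, 43473372, 86946744, 49852679,
  99705358, 54989419, 109978838, 96051163, 64416193, 128832386, 134115699, 123286673,
  102219605, 76196061, 28346317, 56692634, 113385268, 86108191, 48629321, 97258642,
  54382419, 108764838, 72543035, 134217728, 268435456, 517443067, 199049338, 398098676,
  419912292, 215562547, 286762001, 486065625, 260296766, 396523019, 423016346, 213574351,
  298849257, 494381609, 211619806, 295684555, 501751405, 228747094, 333519067, 420854861,
  217904481, 291257525, 477099153, 246264494, 369013547, 495926746, 225189944, 310220295,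
  439132661, 177131025, 354262050, 474571720, 249601052, 358936143, 482051858, 252007848,
  380599591, 455909826, 143576703, 287153406, 485274631, 262878082, 401846643, 429209962,
  234749743, 324937769, 409722281, 234895017, 346405669, 523840966]

def A2 : List ℕ := [
  134217728, 268435456, 520252448, 161702423, 323404846, 428860540, 203269336, 278831047,
  507466670, 198778123, 397556246, 415485563, 243658966, 363739099, 486266337, 240128405,
  335934813, 531386605, 150936461, 301872922, 486408724, 240893567, 336767625, 528674629,
  144860381, 289720762, 495714132, 212878591, 298147721, 478729010, 246815795, 365555217,
  473196149, 265254589, 389757709, 433179725, 211940538, 300302083, 483267110, 238788123,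
  349366849, 503475925, 195258365, 390516730, 422192547, 223749990, 302618811, 454122838,
  153147020, 306294040, 461452816, 1, 2, 4, 8, 16,
  32, 64, 128, 256, 512, 1024, 2048, 4096,
  8192, 16384, 32768, 65536, 131072, 262144, 524288, 1048576,
  2097152, 4194304, 8388608, 16777216, 33554432, 67108864, 10868343, 21736686,
  43473372, 86946744, 49852679, 99705358, 54989419, 109978838, 96051163, 64416193,
  128832386, 134115699, 123286673, 102219605, 76196061, 28346317, 56692634, 113385268,
  86108191, 48629321, 97258642, 54382419, 108764838, 72543035]

def QQ : List ℕ := [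
  384219729, 231568546, 463137092, 389403272, 241935632, 81218080, 296653888, 56436864,
  515526912, 91529728, 317277184, 97683456, 195366912, 390733824, 378814464, 220758016,
  38862848, 480378880, 423886848, 176685056, 219152384, 438304768, 339738624, 142606336,
  285212672, 33554432, 469762048, 402653184, 268435456]

def YY : List ℕ := [
  191260665053185, 382521330106370, 765042660212740, 1530085320425480, 808370827165713, 1616741654331426, 981683494977605, 1963366989955210,
  1674934166225173, 1098068518765099, 2196137037530198, 2140474261375149, 2029148709065051, 1806497604444855, 1361195395204463, 470590976723679,
  941181953447358, 1882363906894716, 1512928000104185, 774056186523123, 1548112373046246, 844424932407245, 1688849864814490, 1125899915943733,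
  18202219, 36404438, 72808876, 145617752, 291235504, 582471008, 1164942016, 2329884032,
  4659768064, 9319536128, 18639072256, 37278144512, 74556289024, 149112578048, 298225156096, 596450312192,
  1192900624384, 2385801248768, 4771602497536, 9543204995072, 19086409990144, 38172819980288, 76345639960576, 152691279921152,
  305382559842304, 610765119684608, 1221530239369216, 3621858857794940042033640865858, 2173115314676964729880282595460, 4346230629353929459760565190920, 3621858857794941313534317560337, 2173115314676965021081822299171,
  4346230629353927790363830913095, 3621858857794940226540662689934, 2173115314676965098894326243612, 4346230629353927945988838801977, 3621858857794940537790678467698, 2173115314676965721394357799140, 4346230629353929190988901913033, 3621858857794940775990991004563,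
  2173115314676963945995169187623, 4346230629353927891990338375246, 3621858857794940429793677614236, 2173115314676965505400356092216, 4346230629353928759000898499185, 3621858857794939912014984176867, 2173115314676964469842969217478, 4346230629353928939685938434956,
  3621858857794940273385064048409, 2173115314676965192583128960562, 4346230629353928133366444235877, 3621858857794940912545889335498, 2173115314676964219104965849493, 4346230629353928438209931698986, 3621858857794941522232864261716, 2173115314676965438478915701929,
  4346230629353928625158017718611, 3621858857794939644329222615719, 2173115314676963934471446095182, 4346230629353927868942892190364, 3621858857794940383698785244472, 2173115314676965413210571352688, 4346230629353928574621329020129, 3621858857794939543255845218755,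
  2173115314676963732324691301254, 4346230629353927464649382602508, 3621858857794939575111766068760, 2173115314676963796036533001264, 4346230629353927592073066002528, 3621858857794939829959132868800, 2173115314676964305731266601344, 4346230629353928611462533202688,
  3621858857794939616938253583873, 2173115314676963879689508031490, 4346230629353927759379016062980, 3621858857794940164571032989704, 2173115314676964974955066843152, 4346230629353927698110320001057]

theorem check1ff : check A1 false false = true := by decide +kernel

theorem check1ft : check A1 false true = true := by decide +kernel

theorem check1tf : check A1 true false = true := by decide +kernel

theorem check1tt : check A1 true true = true := by decide +kernel

theorem check2ff : check A2 false false = true := by decide +kernel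

theorem check2ft : check A2 false true = true := by decide +kernel

theorem check2tf : check A2 true false = true := by decide +kernel

theorem check2tt : check A2 true true = true := by decide +kernel


/-! ### Semantics of the bit-sliced computation -/

def lcb : ℕ → List Bool → Bool
  | _, [] => false
  | a, x :: xs => bif Nat.beq (Nat.land a 1) 1 then Bool.xor x (lcb (Nat.shiftRight a 1) xs)
      else lcb (Nat.shiftRight a 1) xs

def bitsAt (xs : List ℕ) (k : ℕ) : List Bool := xs.map (fun t => t.testBit k)

theorem xor_tb (a b k : ℕ) : (Nat.xor a b).testBit k = Bool.xor (a.testBit k) (b.testBit k) :=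
  Nat.testBit_xor a b k

theorem land_tb (a b k : ℕ) : (Nat.land a b).testBit k = (a.testBit k && b.testBit k) :=
  Nat.testBit_and a b k

theorem lor_tb (a b k : ℕ) : (Nat.lor a b).testBit k = (a.testBit k || b.testBit k) :=
  Nat.testBit_or a b k

theorem shl_tb (a l k : ℕ) :
    (Nat.shiftLeft a l).testBit k = (decide (l ≤ k) && a.testBit (k - l)) := by
  have := Nat.testBit_shiftLeft (i := l) (j := k) a
  simpa using this

theorem ones_eq (l : ℕ) : ones l = 2 ^ l - 1 := by
  have : Nat.shiftLeft 1 l = 2 ^ l := by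
    have := Nat.shiftLeft_eq 1 l
    simpa using this
  unfold ones
  rw [this]
  rfl

theorem ones_tb (l k : ℕ) : (ones l).testBit k = decide (k < l) := by
  rw [ones_eq, Nat.testBit_two_pow_sub_one]

theorem lcN_tb (k : ℕ) (xs : List ℕ) :
    ∀ a, (lcN a xs).testBit k = lcb a (bitsAt xs k) := by
  induction xs with
  | nil => intro a; simp [lcN, lcb, bitsAt]
  | cons x xs ih =>
    intro a
    have h := ih (Nat.shiftRight a 1)
    simp only [lcN, lcb, bitsAt, List.map_cons] at h ⊢
    cases Nat.beq (Nat.land a 1) 1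
    · simpa using h
    · simp only [cond_true, xor_tb, h]

def val : List ℕ → ℕ → ℕ
  | [], _ => 0
  | s :: ss, k => (s.testBit k).toNat + 2 * val ss k

theorem inc_length (ss : List ℕ) : ∀ b, (inc ss b).length = ss.length := by
  induction ss with
  | nil => intro b; rfl
  | cons s ss ih => intro b; simp [inc, ih]

theorem inc_val (k : ℕ) (ss : List ℕ) :
    ∀ b, val (inc ss b) k ≤ val ss k + (b.testBit k).toNat := by
  induction ss with
  | nil => intro b; simp [inc, val]
  | cons s ss ih =>
    intro b
    have h := ih (Nat.land s b)
    simp only [inc, val, xor_tb, land_tb] at h ⊢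
    cases hs : s.testBit k <;> cases hb : b.testBit k <;> simp [hs, hb] at h ⊢ <;> omega

theorem cnt_length (xs : List ℕ) (A : List ℕ) : ∀ s, (cnt A xs s).length = s.length := by
  induction A with
  | nil => intro s; rfl
  | cons a A ih => intro s; simp [cnt, ih, inc_length]

theorem cnt_val (k : ℕ) (xs : List ℕ) (A : List ℕ) : ∀ s,
    val (cnt A xs s) k ≤ val s k + (A.map fun a => (lcb a (bitsAt xs k)).toNat).sum := by
  induction A with
  | nil => intro s; simp [cnt]
  | cons a A ih =>
    intro s
    have h := ih (inc s (lcN a xs))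
    have h2 := inc_val k s (lcN a xs)
    rw [lcN_tb] at h2
    simp only [cnt, List.map_cons, List.sum_cons]
    omega

theorem ge28_val (s : List ℕ) (k : ℕ) (h : (ge28 s).testBit k = true) : 28 ≤ val s k := by
  unfold ge28 at h
  split at h
  · rename_i s0 s1 s2 s3 s4 s5 s6
    simp only [lor_tb, land_tb] at h
    simp only [val]
    cases h2 : s2.testBit k <;> cases h3 : s3.testBit k <;> cases h4 : s4.testBit k <;>
      cases h5 : s5.testBit k <;> cases h6 : s6.testBit k <;> simp [h2, h3, h4, h5, h6] at h ⊢ <;>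
      omega
  · simp at h

theorem orAll_tb (k : ℕ) (xs : List ℕ) (h : true ∈ bitsAt xs k) :
    (orAll xs).testBit k = true := by
  induction xs with
  | nil => simp [bitsAt] at h
  | cons x xs ih =>
    simp only [orAll, lor_tb, Bool.or_eq_true]
    simp only [bitsAt, List.map_cons, List.mem_cons] at h
    rcases h with h | h
    · exact Or.inl h.symm
    · exact Or.inr (ih h)

structure Good (n k : ℕ) (e : List ℕ × ℕ) : Prop where
  len : e.1.length = n
  bd : ∀ t ∈ e.1, t < 2 ^ e.2
  ex : ∀ m : List Bool, m.length = n → m.count true < k → ∃ p < e.2, bitsAt e.1 p = m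

theorem merge_length (l : ℕ) (as : List ℕ) : ∀ bs, as.length = bs.length →
    (merge l as bs).length = as.length := by
  induction as with
  | nil => intro bs _; simp [merge]
  | cons a as ih =>
    intro bs h
    cases bs with
    | nil => simp at h
    | cons b bs => simp [merge, ih bs (by simpa using h)]

theorem merge_lo (l p : ℕ) (hp : p < l) (as : List ℕ) : ∀ bs, as.length = bs.length →
    bitsAt (merge l as bs) p = bitsAt as p := by
  induction as with
  | nil => intro bs _; simp [merge]
  | cons a as ih =>
    intro bs h
    cases bs with
    | nil => simp at h
    | cons b bs =>
      have := ih bs (by simpa using h)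
      simp only [bitsAt, merge, List.map_cons, lor_tb, shl_tb] at this ⊢
      rw [this]
      simp [hp]

theorem merge_hi (l q : ℕ) (as : List ℕ) : ∀ bs, as.length = bs.length →
    (∀ t ∈ as, t < 2 ^ l) → bitsAt (merge l as bs) (l + q) = bitsAt bs q := by
  induction as with
  | nil =>
    intro bs h _
    cases bs with
    | nil => rfl
    | cons b bs => simp at h
  | cons a as ih =>
    intro bs h hb
    cases bs with
    | nil => simp at h
    | cons b bs =>
      have := ih bs (by simpa using h) (fun t ht => hb t (List.mem_cons_of_mem _ ht))
      have ha : a.testBit (l + q) = false := by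
        apply Nat.testBit_lt_two_pow
        calc a < 2 ^ l := hb a List.mem_cons_self
          _ ≤ 2 ^ (l + q) := Nat.pow_le_pow_right (by norm_num) (by omega)
      simp only [bitsAt, merge, List.map_cons, lor_tb, shl_tb] at this ⊢
      rw [this]
      simp [ha]

theorem shl_lt (a l r : ℕ) (h : a < 2 ^ r) : Nat.shiftLeft a l < 2 ^ (l + r) := by
  have h1 : Nat.shiftLeft a l = a * 2 ^ l := by
    have := Nat.shiftLeft_eq a l
    simpa using this
  rw [h1, pow_add, mul_comm]
  exact Nat.mul_lt_mul_of_pos_left h (by positivity)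

theorem merge_bd (l r : ℕ) (as : List ℕ) : ∀ bs, (∀ t ∈ as, t < 2 ^ l) →
    (∀ t ∈ bs, t < 2 ^ r) → ∀ t ∈ merge l as bs, t < 2 ^ (l + r) := by
  induction as with
  | nil => intro bs _ _ t ht; simp [merge] at ht
  | cons a as ih =>
    intro bs ha hb t ht
    cases bs with
    | nil => simp [merge] at ht
    | cons b bs =>
      simp only [merge, List.mem_cons] at ht
      rcases ht with rfl | ht
      · apply Nat.or_lt_two_pow
        · calc a < 2 ^ l := ha a List.mem_cons_self
            _ ≤ 2 ^ (l + r) := Nat.pow_le_pow_right (by norm_num) (by omega)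
        · exact shl_lt _ _ _ (hb b List.mem_cons_self)
      · exact ih bs (fun t ht => ha t (List.mem_cons_of_mem _ ht))
          (fun t ht => hb t (List.mem_cons_of_mem _ ht)) t ht

theorem combine_good {n k k' : ℕ} {c d : List ℕ × ℕ} (hc : Good n k c) (hd : Good n k' d)
    (hk : k ≤ k' + 1) : Good (n + 1) k (combine c d) := by
  have hl : c.1.length = d.1.length := hc.len.trans hd.len.symm
  refine ⟨?_, ?_, ?_⟩
  · simp [combine, merge_length _ _ _ hl, hc.len]
  · intro t ht
    simp only [combine, List.mem_cons] at ht
    change t < 2 ^ (c.2 + d.2)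
    rcases ht with rfl | ht
    · apply shl_lt
      rw [ones_eq]
      have : 0 < 2 ^ d.2 := by positivity
      omega
    · exact merge_bd _ _ _ _ hc.bd hd.bd t ht
  · intro m hm hcount
    cases m with
    | nil => simp at hm
    | cons b m =>
      have hm' : m.length = n := by simpa using hm
      cases b with
      | false =>
        obtain ⟨p, hp, hpe⟩ := hc.ex m hm' (by simpa using hcount)
        refine ⟨p, ?_, ?_⟩
        · change p < c.2 + d.2
          omega
        · have h1 := merge_lo c.2 p hp c.1 d.1 hl
          rw [hpe] at h1
          simp only [combine]
          simp only [bitsAt, List.map_cons, shl_tb] at h1 ⊢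
          rw [h1]
          simp [hp]
      | true =>
        have hcount' : m.count true < k' := by
          simp at hcount
          omega
        obtain ⟨p, hp, hpe⟩ := hd.ex m hm' hcount'
        refine ⟨c.2 + p, ?_, ?_⟩
        · change c.2 + p < c.2 + d.2
          omega
        · have h1 := merge_hi c.2 p c.1 d.1 hl hc.bd
          rw [hpe] at h1
          simp only [combine]
          simp only [bitsAt, List.map_cons, shl_tb, ones_tb] at h1 ⊢
          rw [h1]
          simp [hp]

def RG (n : ℕ) : ℕ → List (List ℕ × ℕ) → Prop
  | _, [] => True
  | k, c :: cs => Good n k c ∧ RG n (k + 1) cs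

theorem stepAux_good {n : ℕ} (cs : List (List ℕ × ℕ)) : ∀ (k k' : ℕ) (p : List ℕ × ℕ),
    Good n k' p → k ≤ k' + 1 → RG n k cs → RG (n + 1) k (stepAux p cs) := by
  induction cs with
  | nil => intro k k' p _ _ _; trivial
  | cons c cs ih =>
    intro k k' p hp hk h
    exact ⟨combine_good h.1 hp hk, ih (k + 1) k c h.1 le_rfl h.2⟩

theorem step_good {n k : ℕ} (cs : List (List ℕ × ℕ)) (h : RG n k cs) :
    RG (n + 1) k (step cs) := by
  cases cs with
  | nil => trivial
  | cons c cs => exact stepAux_good (c :: cs) k k c h.1 (by omega) h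

theorem stepAux_length (cs : List (List ℕ × ℕ)) : ∀ p, (stepAux p cs).length = cs.length := by
  induction cs with
  | nil => intro p; rfl
  | cons c cs ih => intro p; simp [stepAux, ih]

theorem rows_length (n : ℕ) : (rows n).length = 8 := by
  induction n with
  | zero => rfl
  | succ n ih =>
    have : ∀ cs, (step cs).length = cs.length := by
      intro cs
      cases cs with
      | nil => rfl
      | cons c cs => exact stepAux_length _ _
    rw [rows, this, ih]

theorem rows_good (n : ℕ) : RG n 0 (rows n) := by
  induction n with
  | zero =>
    have h1 : ∀ k, Good 0 k ([], 1) := fun k =>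
      ⟨rfl, by simp, fun m hm _ => ⟨0, by norm_num, by
        rw [List.length_eq_zero_iff.mp hm]; rfl⟩⟩
    have h0 : Good 0 0 ([], 0) := ⟨rfl, by simp, fun m _ h => by omega⟩
    exact ⟨h0, h1 _, h1 _, h1 _, h1 _, h1 _, h1 _, h1 _, trivial⟩
  | succ n ih => exact step_good _ ih

theorem RG_getD {n : ℕ} (cs : List (List ℕ × ℕ)) : ∀ k i, RG n k cs → i < cs.length →
    Good n (k + i) (cs.getD i ([], 0)) := by
  induction cs with
  | nil => intro k i _ h; simp at h
  | cons c cs ih =>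
    intro k i h hi
    cases i with
    | zero => simpa using h.1
    | succ i =>
      have := ih (k + 1) i h.2 (by simpa using hi)
      simpa [add_assoc, add_comm 1 i] using this

theorem enum_good : Good 27 7 enum := by
  have := RG_getD (rows 27) 0 7 (rows_good 27) (by rw [rows_length]; norm_num)
  rw [zero_add] at this
  exact this

theorem check_sound (A : List ℕ) (x y : Bool) (h : check A x y = true) (m : List Bool)
    (hm : m.length = 27) (hc : m.count true ≤ 6) (hnz : true ∈ m ++ [x, y]) :
    28 ≤ (A.map fun a => (lcb a (m ++ [x, y])).toNat).sum := by
  obtain ⟨p, hp, hpe⟩ := enum_good.ex m hm (by omega)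
  have hfree : ∀ b, (free b enum.2).testBit p = b := by
    intro b
    cases b
    · simp [free]
    · simp [free, ones_tb, hp]
  have ht : bitsAt (tabs x y) p = m ++ [x, y] := by
    rw [← hpe]
    simp [bitsAt, tabs, hfree]
  have h1 := Nat.eq_of_beq_eq_true h
  have h2 := congrArg (fun t => t.testBit p) h1
  simp only [land_tb] at h2
  rw [orAll_tb p (tabs x y) (by rw [ht]; exact hnz), Bool.true_and] at h2
  have h3 := ge28_val _ _ h2
  have h4 := cnt_val p (tabs x y) A [0, 0, 0, 0, 0, 0, 0]
  rw [ht] at h4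
  have h5 : val [0, 0, 0, 0, 0, 0, 0] p = 0 := by simp [val]
  omega

/-! ### The ring `R` -/

noncomputable section

abbrev Rr : Type := Rng (ZMod 2) 51

def rho : Rr := AdjoinRoot.root (X ^ 51 - 1 : (ZMod 2)[X])

def cf (i : ℕ) : Rr →ₗ[ZMod 2] ZMod 2 :=
  (Polynomial.lcoeff (ZMod 2) i).comp
    (AdjoinRoot.modByMonicHom (monicXm (F := ZMod 2) (m := 51) (by norm_num)))

theorem deg51 : (X ^ 51 - 1 : (ZMod 2)[X]).degree = 51 := by
  have := Polynomial.degree_X_pow_sub_C (R := ZMod 2) (n := 51) (by norm_num) 1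
  simpa using this

theorem rho51 : rho ^ 51 = 1 := by
  have h : AdjoinRoot.mk (X ^ 51 - 1 : (ZMod 2)[X]) (X ^ 51 - 1) = 0 := AdjoinRoot.mk_self
  rw [map_sub, map_pow, AdjoinRoot.mk_X, map_one] at h
  exact sub_eq_zero.mp h

theorem rho_mod (n : ℕ) : rho ^ n = rho ^ (n % 51) := by
  conv_lhs => rw [← Nat.div_add_mod n 51, pow_add, pow_mul, rho51, one_pow, one_mul]

theorem cf_rho (i n : ℕ) : cf i (rho ^ n) = if n % 51 = i then 1 else 0 := by
  rw [rho_mod]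
  have hn : n % 51 < 51 := Nat.mod_lt _ (by norm_num)
  have h1 : rho ^ (n % 51) = AdjoinRoot.mk (X ^ 51 - 1 : (ZMod 2)[X]) (X ^ (n % 51)) := by
    rw [map_pow, AdjoinRoot.mk_X]
    rfl
  rw [h1]
  unfold cf
  rw [LinearMap.comp_apply, AdjoinRoot.modByMonicHom_mk,
    (Polynomial.modByMonic_eq_self_iff (monicXm (by norm_num))).2]
  · simp [Polynomial.coeff_X_pow, eq_comm]
  · rw [deg51, Polynomial.degree_X_pow]
    exact_mod_cast hn

theorem natDeg_lt (r : Rr) : (AdjoinRoot.modByMonicHom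
    (monicXm (F := ZMod 2) (m := 51) (by norm_num)) r).natDegree < 51 := by
  obtain ⟨P, rfl⟩ := AdjoinRoot.mk_surjective r
  rw [AdjoinRoot.modByMonicHom_mk]
  have h := Polynomial.natDegree_modByMonic_lt P
    (monicXm (F := ZMod 2) (m := 51) (by norm_num)) (by
      intro h
      have := deg51
      rw [h] at this
      simp at this)
  have h2 : (X ^ 51 - 1 : (ZMod 2)[X]).natDegree = 51 :=
    Polynomial.natDegree_eq_of_degree_eq_some deg51
  omega

theorem expand (r : Rr) : r = ∑ i ∈ Finset.range 51, cf i r • rho ^ i := by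
  have h1 := AdjoinRoot.mk_leftInverse (monicXm (F := ZMod 2) (m := 51) (by norm_num)) r
  have h2 := Polynomial.as_sum_range' _ 51 (natDeg_lt r)
  conv_lhs => rw [← h1, h2]
  rw [map_sum]
  refine Finset.sum_congr rfl fun i _ => ?_
  rw [← Polynomial.C_mul_X_pow_eq_monomial, map_mul, map_pow, AdjoinRoot.mk_X, Algebra.smul_def]
  rfl

theorem cf_ext {r s : Rr} (h : ∀ i < 51, cf i r = cf i s) : r = s := by
  rw [expand r, expand s]
  exact Finset.sum_congr rfl fun i hi => by rw [h i (Finset.mem_range.mp hi)]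

theorem lin_ext {M : Type*} [AddCommGroup M] [Module (ZMod 2) M] (f g : Rr →ₗ[ZMod 2] M)
    (h : ∀ n < 51, f (rho ^ n) = g (rho ^ n)) : f = g := by
  ext1 r
  rw [expand r, map_sum, map_sum]
  refine Finset.sum_congr rfl fun i hi => ?_
  rw [map_smul, map_smul, h i (Finset.mem_range.mp hi)]

def bz (x : ZMod 2) : Bool := decide (x ≠ 0)

theorem bz_add : ∀ x y : ZMod 2, bz (x + y) = Bool.xor (bz x) (bz y) := by decide

theorem bz_inj : ∀ x y : ZMod 2, bz x = bz y → x = y := by decide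

theorem bz_zero : bz 0 = false := by decide

theorem bz_one : bz 1 = true := by decide

theorem wt_eq (h : 51 ≠ 0) (r : Rr) :
    wt h r = ∑ i ∈ Finset.range 51, (bz (cf i r)).toNat := by
  unfold wt
  have : (AdjoinRoot.modByMonicHom (monicXm (F := ZMod 2) h) r).support =
      (Finset.range 51).filter (fun i => cf i r ≠ 0) := by
    ext i
    rw [Finset.mem_filter, Finset.mem_range, Polynomial.mem_support_iff]
    constructor
    · intro hi
      refine ⟨lt_of_le_of_lt (Polynomial.le_natDegree_of_ne_zero hi) (natDeg_lt r), hi⟩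
    · intro hi
      exact hi.2
  rw [this, Finset.card_filter]
  refine Finset.sum_congr rfl fun i _ => ?_
  unfold bz
  by_cases h0 : cf i r = 0 <;> simp [h0]

theorem cf_shift (i s : ℕ) (hi : i < 51) (hs : s < 51) (r : Rr) :
    cf i (rho ^ s * r) = cf ((i + 51 - s) % 51) r := by
  have : (cf i).comp (LinearMap.mulLeft (ZMod 2) (rho ^ s)) = cf ((i + 51 - s) % 51) := by
    apply lin_ext
    intro n hn
    rw [LinearMap.comp_apply, LinearMap.mulLeft_apply, ← pow_add, cf_rho, cf_rho]
    congr 1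
    apply propext
    omega
  rw [← this]
  rfl

theorem wt_shift (h : 51 ≠ 0) (s : ℕ) (hs : s < 51) (r : Rr) : wt h (rho ^ s * r) = wt h r := by
  rw [wt_eq, wt_eq]
  refine Finset.sum_nbij' (fun i => (i + 51 - s) % 51) (fun t => (t + s) % 51) ?_ ?_ ?_ ?_ ?_
  · intro i hi; simp only [Finset.mem_range] at *; omega
  · intro i hi; simp only [Finset.mem_range] at *; omega
  · intro i hi; simp only [Finset.mem_range] at *; omega
  · intro i hi; simp only [Finset.mem_range] at *; omega
  · intro i hi
    rw [cf_shift i s (Finset.mem_range.mp hi) hs]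

theorem light (h : 51 ≠ 0) (r : Rr) (hr : wt h r ≤ 13) :
    ∃ s < 51, ∑ i ∈ Finset.range 27, (bz (cf i (rho ^ s * r))).toNat ≤ 6 := by
  by_contra hcon
  push Not at hcon
  have h1 : ∑ s ∈ Finset.range 51, 7 ≤
      ∑ s ∈ Finset.range 51, ∑ i ∈ Finset.range 27, (bz (cf i (rho ^ s * r))).toNat :=
    Finset.sum_le_sum fun s hs => hcon s (Finset.mem_range.mp hs)
  rw [Finset.sum_comm] at h1
  have h2 : ∀ i ∈ Finset.range 27,
      ∑ s ∈ Finset.range 51, (bz (cf i (rho ^ s * r))).toNat = wt h r := by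
    intro i hi
    have hi := Finset.mem_range.mp hi
    rw [wt_eq]
    refine Finset.sum_nbij' (fun s => (i + 51 - s) % 51) (fun t => (i + 51 - t) % 51)
      ?_ ?_ ?_ ?_ ?_
    · intro i hi; simp only [Finset.mem_range] at *; omega
    · intro i hi; simp only [Finset.mem_range] at *; omega
    · intro i hi; simp only [Finset.mem_range] at *; omega
    · intro i hi; simp only [Finset.mem_range] at *; omega
    · intro s hs
      rw [cf_shift i s (by omega) (Finset.mem_range.mp hs)]
  rw [Finset.sum_congr rfl h2] at h1
  simp only [Finset.sum_const, Finset.card_range, smul_eq_mul] at h1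
  omega

/-! ### The generators -/

def pl (L : List ℕ) : Rr := (L.map (fun e => rho ^ e)).sum

def L1 : List ℕ := [24, 23, 21, 19, 18, 15, 14, 13, 12, 11, 9, 8, 6, 4, 0]

def Lg : List ℕ := [50, 49, 48, 46, 44, 43, 42, 41, 38, 37, 36, 34, 32, 29, 27, 25, 24, 19, 17,
  15, 13, 12, 10, 8, 5, 1, 0]

def L2 : List ℕ := [0, 1, 3, 4, 6, 7, 9, 10, 12, 13, 15, 16, 18, 19, 21, 22, 24, 25, 27, 28, 30,
  31, 33, 34, 36, 37, 39, 40, 42, 43, 45, 46, 48, 49]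

def Lp : List ℕ := [3, 4, 5, 8, 11, 12, 13, 17, 18, 21, 23, 25, 28, 29, 30, 35, 36, 45, 50]

theorem f₁_eq : f₁ = pl L1 := by
  simp only [f₁, pl, L1, List.map_cons, List.map_nil, List.sum_cons, List.sum_nil, map_add,
    map_pow, AdjoinRoot.mk_X, map_one, rho, pow_zero, add_zero]
  ring

theorem g_eq : g = pl Lg := by
  simp only [g, pl, Lg, List.map_cons, List.map_nil, List.sum_cons, List.sum_nil, map_add,
    map_pow, AdjoinRoot.mk_X, map_one, rho, pow_zero, add_zero, pow_one]
  ring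

theorem f₂_eq : f₂ = pl L2 := by
  have hm : (X ^ 2 + X + 1 : (ZMod 2)[X]).Monic := by monicity!
  have h1 : (X ^ 51 - 1 : (ZMod 2)[X]) = (X ^ 2 + X + 1) * ((X - 1) * (1 + X ^ 3 + X ^ 6 + X ^ 9 +
      X ^ 12 + X ^ 15 + X ^ 18 + X ^ 21 + X ^ 24 + X ^ 27 + X ^ 30 + X ^ 33 + X ^ 36 + X ^ 39 +
      X ^ 42 + X ^ 45 + X ^ 48)) := by ring
  have h2 : (X ^ 51 - 1 : (ZMod 2)[X]) /ₘ (X ^ 2 + X + 1) = (X + 1) * (1 + X ^ 3 + X ^ 6 + X ^ 9 +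
      X ^ 12 + X ^ 15 + X ^ 18 + X ^ 21 + X ^ 24 + X ^ 27 + X ^ 30 + X ^ 33 + X ^ 36 + X ^ 39 +
      X ^ 42 + X ^ 45 + X ^ 48) := by
    conv_lhs => rw [h1, Polynomial.mul_divByMonic_cancel_left _ hm]
    rw [CharTwo.sub_eq_add]
  unfold f₂
  rw [h2]
  simp only [pl, L2, List.map_cons, List.map_nil, List.sum_cons, List.sum_nil, map_add, map_mul,
    map_pow, AdjoinRoot.mk_X, map_one, rho, pow_zero, add_zero, pow_one]
  ring

def pb : List ℕ → ℕ → ℕ → Bool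
  | [], _, _ => false
  | e :: L, k, i => Bool.xor (Nat.beq (Nat.mod (Nat.add k e) 51) i) (pb L k i)

theorem bz_cf (L : List ℕ) (k i : ℕ) : bz (cf i (rho ^ k * pl L)) = pb L k i := by
  induction L with
  | nil => simp [pl, pb, bz_zero]
  | cons e L ih =>
    have h : rho ^ k * pl (e :: L) = rho ^ (k + e) + rho ^ k * pl L := by
      simp only [pl, List.map_cons, List.sum_cons]
      ring
    rw [h, map_add, bz_add, ih, cf_rho, pb]
    change _ = Bool.xor (Nat.beq ((k + e) % 51) i) (pb L k i)
    congr 1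
    by_cases hh : (k + e) % 51 = i
    · simp [hh, bz_one]
    · rw [if_neg hh, bz_zero]
      exact (Bool.eq_false_iff.mpr fun h0 => hh (Nat.eq_of_beq_eq_true h0)).symm

def pb2 : List ℕ → ℕ → Bool
  | [], _ => false
  | e :: L, i => Bool.xor (pb Lg e i) (pb2 L i)

theorem bz_cf2 (L : List ℕ) (i : ℕ) : bz (cf i (pl L * pl Lg)) = pb2 L i := by
  induction L with
  | nil => simp [pl, pb2, bz_zero]
  | cons e L ih =>
    have h : pl (e :: L) * pl Lg = rho ^ e * pl Lg + pl L * pl Lg := by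
      simp only [pl, List.map_cons, List.sum_cons]
      ring
    rw [h, map_add, bz_add, ih, bz_cf, pb2]

theorem pb2_check : (List.range 51).all (fun i => pb2 L1 i == pb Lp 0 i) = true := by
  decide +kernel

theorem f₁g_eq : f₁ * g = pl Lp := by
  apply cf_ext
  intro i hi
  apply bz_inj
  have h := List.all_eq_true.mp pb2_check i (List.mem_range.mpr hi)
  rw [f₁_eq, g_eq, bz_cf2, eq_of_beq h, ← bz_cf, pow_zero, one_mul]

/-! ### The code -/

def T : Rr × Rr →ₗ[ZMod 2] Rr × Rr where
  toFun q := (q.1 * f₁, q.1 * f₁ * g + q.2 * f₂)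
  map_add' q r := by
    ext <;> simp <;> ring
  map_smul' c q := by
    ext <;> simp

def ph (j : ℕ) : Rr × Rr →ₗ[ZMod 2] ZMod 2 :=
  if j < 51 then (cf j).comp (LinearMap.fst _ _ _) else (cf (j - 51)).comp (LinearMap.snd _ _ _)

theorem ph_lo {j : ℕ} (hj : j < 51) (p : Rr × Rr) : ph j p = cf j p.1 := by
  simp [ph, hj]

theorem ph_hi (j : ℕ) (p : Rr × Rr) : ph (51 + j) p = cf j p.2 := by
  simp [ph]

def gen (k : ℕ) : Rr × Rr := if k < 51 then (rho ^ k, 0) else (0, rho ^ (k - 51))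

def tb (F n : ℕ) : ℕ := Nat.land 1 (Nat.shiftRight F n)

def M1 : ℕ := 28113745

def M2 : ℕ := 965057063007963

def Mp : ℕ := 1161189281642808

theorem M_check : (List.range 51).all (fun i => Nat.beq (tb M1 i) (pb L1 0 i).toNat &&
    (Nat.beq (tb M2 i) (pb L2 0 i).toNat && Nat.beq (tb Mp i) (pb Lp 0 i).toNat)) = true := by
  decide +kernel

/-- The expected bit (as a number) of the `k`-th generator at coordinate `j`. -/
def yb (j k : ℕ) : ℕ :=
  bif Nat.blt j 51 then
    (bif Nat.blt k 51 then tb M1 (Nat.mod (Nat.sub (Nat.add j 51) k) 51) else 0)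
  else (bif Nat.blt k 51 then tb Mp (Nat.mod (Nat.sub j k) 51)
    else tb M2 (Nat.mod (Nat.sub (Nat.add j 51) k) 51))

theorem blt_eq' (a b : ℕ) : Nat.blt a b = decide (a < b) := by
  rw [Bool.eq_iff_iff, Nat.blt_eq, decide_eq_true_eq]

theorem bz_mask (L : List ℕ) (F i k n : ℕ) (hi : i < 51) (hk : k < 51)
    (hF : ∀ t < 51, tb F t = (pb L 0 t).toNat) (hn : n = (i + 51 - k) % 51) :
    (bz (cf i (rho ^ k * pl L))).toNat = tb F n := by
  subst hn
  rw [cf_shift i k hi hk, hF _ (Nat.mod_lt _ (by norm_num)), ← bz_cf, pow_zero, one_mul]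

theorem yb_eq (j k : ℕ) (hj2 : j < 102) (hk2 : k < 102) :
    (bz (ph j (T (gen k)))).toNat = yb j k := by
  have hT : ∀ q, T q = (q.1 * f₁, q.1 * f₁ * g + q.2 * f₂) := fun q => rfl
  have hM : ∀ t < 51, tb M1 t = (pb L1 0 t).toNat ∧ tb M2 t = (pb L2 0 t).toNat ∧
      tb Mp t = (pb Lp 0 t).toNat := by
    intro t ht
    have h := List.all_eq_true.mp M_check t (List.mem_range.mpr ht)
    rw [Bool.and_eq_true, Bool.and_eq_true] at h
    exact ⟨Nat.eq_of_beq_eq_true h.1, Nat.eq_of_beq_eq_true h.2.1, Nat.eq_of_beq_eq_true h.2.2⟩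
  have hmod : ∀ a, Nat.mod a 51 = a % 51 := fun a => rfl
  simp only [yb, blt_eq', hmod]
  by_cases hj : j < 51 <;> by_cases hk : k < 51
  · have h := bz_mask L1 M1 j k ((j + 51 - k) % 51) hj hk (fun t ht => (hM t ht).1) rfl
    simpa [ph, gen, hT, hj, hk, f₁_eq] using h
  · simp [ph, gen, hT, hj, hk, bz_zero]
  · have h := bz_mask Lp Mp (j - 51) k ((j - k) % 51) (by omega) hk
      (fun t ht => (hM t ht).2.2) (by omega)
    simpa [ph, gen, hT, hj, hk, mul_assoc, f₁g_eq] using h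
  · have h := bz_mask L2 M2 (j - 51) (k - 51) ((j + 51 - k) % 51) (by omega) (by omega)
      (fun t ht => (hM t ht).2.1) (by omega)
    simpa [ph, gen, hT, hj, hk, f₂_eq] using h

theorem YY_check : (List.range 102).all (fun j => (List.range 102).all (fun k =>
    Nat.beq (tb (YY.getD j 0) k) (yb j k))) = true := by
  decide +kernel

theorem YY_eq {j k : ℕ} (hj : j < 102) (hk : k < 102) :
    (YY.getD j 0).testBit k = bz (ph j (T (gen k))) := by
  have h := List.all_eq_true.mp YY_check j (List.mem_range.mpr hj)
  have h2 := List.all_eq_true.mp h k (List.mem_range.mpr hk)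
  have h3 : 1 &&& (YY.getD j 0 >>> k) = yb j k := Nat.eq_of_beq_eq_true h2
  rw [← yb_eq j k hj hk] at h3
  unfold Nat.testBit
  rw [h3]
  cases bz (ph j (T (gen k))) <;> rfl

def lcG {M : Type*} [AddCommMonoid M] : ℕ → List M → M
  | _, [] => 0
  | a, x :: xs => bif Nat.beq (Nat.land a 1) 1 then x + lcG (Nat.shiftRight a 1) xs
      else lcG (Nat.shiftRight a 1) xs

theorem map_lcG {M N : Type*} [AddCommMonoid M] [AddCommMonoid N] (f : M →+ N) (xs : List M) :
    ∀ a, f (lcG a xs) = lcG a (xs.map f) := by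
  induction xs with
  | nil => intro a; simp [lcG]
  | cons x xs ih =>
    intro a
    simp only [lcG, List.map_cons]
    cases Nat.beq (Nat.land a 1) 1
    · simpa using ih _
    · simp [ih]

theorem bz_lcG (xs : List (ZMod 2)) : ∀ a, bz (lcG a xs) = lcb a (xs.map bz) := by
  induction xs with
  | nil => intro a; simp [lcG, lcb, bz_zero]
  | cons x xs ih =>
    intro a
    simp only [lcG, lcb, List.map_cons]
    cases Nat.beq (Nat.land a 1) 1
    · simpa using ih _
    · simp [ih, bz_add]

theorem lcb_false (xs : List Bool) (h : true ∉ xs) : ∀ a, lcb a xs = false := by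
  induction xs with
  | nil => intro a; rfl
  | cons x xs ih =>
    intro a
    rw [List.mem_cons, not_or] at h
    have hx : x = false := by
      cases x
      · rfl
      · exact absurd rfl h.1
    simp [lcb, ih h.2, hx]

theorem lin_ext2 (f g : Rr × Rr →ₗ[ZMod 2] ZMod 2) (h : ∀ k < 102, f (gen k) = g (gen k)) :
    f = g := by
  apply LinearMap.prod_ext
  · apply lin_ext
    intro n hn
    have := h n (by omega)
    simpa [gen, hn] using this
  · apply lin_ext
    intro n hn
    have := h (51 + n) (by omega)
    simpa [gen] using this

def relCheck (A I : List ℕ) : Bool :=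
  (List.range 102).all (fun j => YY.getD j 0 == lcN (A.getD j 0) (I.map fun i => YY.getD i 0))

theorem rel (A I : List ℕ) (hI : ∀ i ∈ I, i < 102) (h : relCheck A I = true) (j : ℕ)
    (hj : j < 102) (q : Rr × Rr) :
    bz (ph j (T q)) = lcb (A.getD j 0) (I.map fun i => bz (ph i (T q))) := by
  have key : (ph j).comp T = lcG (A.getD j 0) (I.map fun i => (ph i).comp T) := by
    apply lin_ext2
    intro k hk
    apply bz_inj
    have e1 := map_lcG (LinearMap.evalAddMonoidHom (σ₁₂ := RingHom.id (ZMod 2)) (gen k))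
      (I.map fun i => (ph i).comp T) (A.getD j 0)
    simp only [LinearMap.evalAddMonoidHom_apply] at e1
    rw [e1, bz_lcG, LinearMap.comp_apply, ← YY_eq hj hk]
    have h1 := eq_of_beq (List.all_eq_true.mp h j (List.mem_range.mpr hj))
    rw [h1, lcN_tb]
    congr 1
    simp only [bitsAt, List.map_map]
    apply List.map_congr_left
    intro i hi
    exact YY_eq (hI i hi) hk
  have e1 := map_lcG (LinearMap.evalAddMonoidHom (σ₁₂ := RingHom.id (ZMod 2)) q)
      (I.map fun i => (ph i).comp T) (A.getD j 0)
  have e2 := congrArg (fun f => f q) key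
  simp only [LinearMap.evalAddMonoidHom_apply, LinearMap.comp_apply] at e1 e2
  rw [e2, e1, bz_lcG]
  simp [List.map_map, Function.comp_def]

def I1 : List ℕ := (List.range 27).map (fun i => i) ++ [51, 52]

def I2 : List ℕ := (List.range 27).map (fun i => 51 + i) ++ [0, 1]

theorem rel1 : relCheck A1 I1 = true := by decide +kernel

theorem rel2 : relCheck A2 I2 = true := by decide +kernel

theorem I1_lt : ∀ i ∈ I1, i < 102 := by decide

theorem I2_lt : ∀ i ∈ I2, i < 102 := by decide

theorem A1_eq : A1 = (List.range 102).map (fun j => A1.getD j 0) := by decide +kernel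

theorem A2_eq : A2 = (List.range 102).map (fun j => A2.getD j 0) := by decide +kernel

theorem sum_list_range (f : ℕ → ℕ) (n : ℕ) :
    ((List.range n).map f).sum = ∑ j ∈ Finset.range n, f j := by
  induction n with
  | zero => simp
  | succ n ih => rw [List.range_succ, List.map_append, List.sum_append, ih,
      Finset.sum_range_succ]; simp

def S (p : Rr × Rr) : ℕ := ∑ j ∈ Finset.range 102, (bz (ph j p)).toNat

theorem S_eq (h : 51 ≠ 0) (p : Rr × Rr) : S p = wt h p.1 + wt h p.2 := by
  unfold S
  rw [show 102 = 51 + 51 from rfl, Finset.sum_range_add, wt_eq, wt_eq]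
  refine congrArg₂ (fun a b => a + b) ?_ ?_
  · exact Finset.sum_congr rfl fun i hi => by rw [ph_lo (Finset.mem_range.mp hi)]
  · exact Finset.sum_congr rfl fun i hi => by rw [ph_hi]

theorem eq_zero_of_S (p : Rr × Rr) (h : S p = 0) : p = 0 := by
  have h1 : ∀ j < 102, ph j p = 0 := by
    intro j hj
    have := (Finset.sum_eq_zero_iff.mp h) j (Finset.mem_range.mpr hj)
    apply bz_inj
    rw [bz_zero]
    cases hb : bz (ph j p)
    · rfl
    · rw [hb] at this
      simp at this
  apply Prod.ext
  · apply cf_ext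
    intro i hi
    rw [← ph_lo hi, h1 i (by omega)]
    simp
  · apply cf_ext
    intro i hi
    rw [← ph_hi, h1 _ (by omega)]
    simp

theorem S_list (A I : List ℕ) (hI : ∀ i ∈ I, i < 102) (h : relCheck A I = true)
    (hA : A = (List.range 102).map (fun j => A.getD j 0)) (q : Rr × Rr) :
    S (T q) = (A.map fun a => (lcb a (I.map fun i => bz (ph i (T q)))).toNat).sum := by
  conv_rhs => rw [hA, List.map_map, sum_list_range]
  exact Finset.sum_congr rfl fun j hj => by
    rw [rel A I hI h j (Finset.mem_range.mp hj) q]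
    rfl

theorem bits_nz (A I : List ℕ) (hI : ∀ i ∈ I, i < 102) (h : relCheck A I = true)
    (hA : A = (List.range 102).map (fun j => A.getD j 0)) (q : Rr × Rr) (hq : T q ≠ 0) :
    true ∈ I.map fun i => bz (ph i (T q)) := by
  by_contra hcon
  apply hq
  apply eq_zero_of_S
  rw [S_list A I hI h hA]
  simp [lcb_false _ hcon]

theorem count_true (f : ℕ → Bool) (n : ℕ) :
    ((List.range n).map f).count true = ∑ i ∈ Finset.range n, (f i).toNat := by
  induction n with
  | zero => simp
  | succ n ih =>
    rw [List.range_succ, List.map_append, List.count_append, ih, Finset.sum_range_succ]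
    cases hf : f n <;> simp [hf]

theorem core (A : List ℕ) (o u v : ℕ)
    (hI : ∀ i ∈ (List.range 27).map (fun i => o + i) ++ [u, v], i < 102)
    (h : relCheck A ((List.range 27).map (fun i => o + i) ++ [u, v]) = true)
    (hA : A = (List.range 102).map (fun j => A.getD j 0))
    (hc : ∀ x y, check A x y = true) (q : Rr × Rr) (hq : T q ≠ 0)
    (hl : ∑ i ∈ Finset.range 27, (bz (ph (o + i) (T q))).toNat ≤ 6) : 28 ≤ S (T q) := by
  have hnz := bits_nz A _ hI h hA q hq
  rw [S_list A _ hI h hA]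
  simp only [List.map_append, List.map_map, List.map_cons, List.map_nil] at hnz ⊢
  apply check_sound A _ _ (hc _ _) _ _ _ hnz
  · simp
  · rw [count_true]
    exact hl

theorem T_shift (s : ℕ) (q : Rr × Rr) :
    T (rho ^ s * q.1, rho ^ s * q.2) = (rho ^ s * (T q).1, rho ^ s * (T q).2) := by
  unfold T
  ext <;> simp <;> ring

theorem main_bound (h : 51 ≠ 0) (q : Rr × Rr) (hq : T q ≠ 0) :
    28 ≤ wt h (T q).1 + wt h (T q).2 := by
  by_contra hcon
  have hS : ∀ s < 51, S (T (rho ^ s * q.1, rho ^ s * q.2)) = S (T q) := by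
    intro s hs
    rw [T_shift, S_eq h, S_eq h, wt_shift h s hs, wt_shift h s hs]
  have hS0 : S (T q) ≠ 0 := fun h0 => hq (eq_zero_of_S _ h0)
  have hne : ∀ s < 51, T (rho ^ s * q.1, rho ^ s * q.2) ≠ 0 := by
    intro s hs h0
    apply hS0
    rw [← hS s hs, h0]
    simp [S, bz_zero]
  have hSq := S_eq h (T q)
  rcases (by omega : wt h (T q).1 ≤ 13 ∨ wt h (T q).2 ≤ 13) with hl | hl
  · obtain ⟨s, hs, hw⟩ := light h _ hl
    have := core A1 0 51 52 (by decide) (by simpa [I1] using rel1) A1_eq (by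
      intro x y
      cases x <;> cases y
      exacts [check1ff, check1ft, check1tf, check1tt]) _ (hne s hs) (by
        refine le_trans (le_of_eq ?_) hw
        refine Finset.sum_congr rfl fun i hi => ?_
        have := Finset.mem_range.mp hi
        rw [zero_add, ph_lo (by omega), T_shift])
    rw [hS s hs] at this
    omega
  · obtain ⟨s, hs, hw⟩ := light h _ hl
    have := core A2 51 0 1 (by decide) rel2 A2_eq (by
      intro x y
      cases x <;> cases y
      exacts [check2ff, check2ft, check2tf, check2tt]) _ (hne s hs) (by
        refine le_trans (le_of_eq ?_) hw
        refine Finset.sum_congr rfl fun i hi => ?_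
        rw [ph_hi, T_shift])
    rw [hS s hs] at this
    omega

/-! ### The dimension -/

def P : Rr × Rr →ₗ[ZMod 2] (Fin 29 → ZMod 2) := LinearMap.pi fun i => ph (I1.getD i 0)

def Qv (i : ℕ) : Rr × Rr := lcG (QQ.getD i 0) (I1.map gen)

theorem QQ_check : (List.range 29).all (fun i => (List.range 29).all (fun j =>
    lcb (QQ.getD i 0) (I1.map fun k => (YY.getD (I1.getD j 0) 0).testBit k) == Nat.beq i j)) =
      true := by
  decide +kernel

theorem I1_getD : ∀ j < 29, I1.getD j 0 < 102 := by decide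

theorem I1_mem : ∀ j ∈ I1, ∃ i : Fin 29, I1.getD i 0 = j := by decide

theorem P_Qv (i : Fin 29) : P (T (Qv i)) = Pi.single i 1 := by
  ext j
  apply bz_inj
  have h := List.all_eq_true.mp QQ_check i (List.mem_range.mpr i.2)
  have h2 := eq_of_beq (List.all_eq_true.mp h j (List.mem_range.mpr j.2))
  have e := map_lcG ((ph (I1.getD j 0)).comp T).toAddMonoidHom (I1.map gen) (QQ.getD i 0)
  have e2 : P (T (Qv i)) j = lcG (QQ.getD i 0) ((I1.map gen).map
      ((ph (I1.getD j 0)).comp T).toAddMonoidHom) := e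
  rw [e2, bz_lcG, List.map_map, List.map_map]
  have e3 : I1.map (fun k => (YY.getD (I1.getD j 0) 0).testBit k) =
      I1.map ((bz ∘ ((ph (I1.getD j 0)).comp T).toAddMonoidHom) ∘ gen) := by
    apply List.map_congr_left
    intro k hk
    exact YY_eq (I1_getD j j.2) (I1_lt k hk)
  rw [e3] at h2
  refine Eq.trans h2 ?_
  by_cases hij : i = j
  · subst hij
    simp [bz_one]
  · have : (i : ℕ) ≠ j := fun h0 => hij (Fin.ext h0)
    rw [Pi.single_eq_of_ne (Ne.symm hij), bz_zero]
    exact Bool.eq_false_iff.mpr fun h0 => this (Nat.eq_of_beq_eq_true h0)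

theorem finrank_T : Module.finrank (ZMod 2) (LinearMap.range T) = 29 := by
  have hb : Function.Bijective (P.domRestrict (LinearMap.range T)) := by
    constructor
    · rw [← LinearMap.ker_eq_bot, LinearMap.ker_eq_bot']
      rintro ⟨p, q, rfl⟩ hp
      have hp' : P (T q) = 0 := hp
      apply Subtype.ext
      change T q = 0
      by_contra hq
      obtain ⟨i, hi, hi2⟩ := List.mem_map.mp (bits_nz A1 I1 I1_lt rel1 A1_eq q hq)
      obtain ⟨t, ht⟩ := I1_mem i hi
      have h3 : ph (I1.getD t 0) (T q) = 0 := congrFun hp' t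
      rw [ht] at h3
      rw [h3, bz_zero] at hi2
      exact absurd hi2 (by simp)
    · intro m
      refine ⟨⟨T (∑ i : Fin 29, m i • Qv i), LinearMap.mem_range_self _ _⟩, ?_⟩
      change P (T (∑ i : Fin 29, m i • Qv i)) = m
      simp only [map_sum, map_smul, P_Qv]
      ext j
      simp [Finset.sum_apply, Pi.single_apply]
  rw [LinearEquiv.finrank_eq (LinearEquiv.ofBijective _ hb)]
  simp

end

end S8

/-- the code `𝒞₃ = {(c₁, c₁·g + c₂) : c₁ ∈ (f₁), c₂ ∈ (f₂)}` in
`R² ≅ 𝔽₂¹⁰²` (with `R = 𝔽₂[x]/(x⁵¹-1)`) is an `𝔽₂`-linear code of length 102 and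
dimension 29, and every nonzero codeword has Hamming weight at least 28. -/
theorem stmt8 :
    ∃ W : Submodule (ZMod 2) (Rng (ZMod 2) 51 × Rng (ZMod 2) 51),
      (W : Set (Rng (ZMod 2) 51 × Rng (ZMod 2) 51)) =
        {v | ∃ c₁ ∈ Ideal.span {f₁}, ∃ c₂ ∈ Ideal.span {f₂}, v = (c₁, c₁ * g + c₂)} ∧
      Module.finrank (ZMod 2) W = 29 ∧
      ∀ c₁ ∈ Ideal.span {f₁}, ∀ c₂ ∈ Ideal.span {f₂},
        ((c₁, c₁ * g + c₂) : Rng (ZMod 2) 51 × Rng (ZMod 2) 51) ≠ 0 →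
        28 ≤ wt (by norm_num) c₁ + wt (by norm_num) (c₁ * g + c₂) := by
  have hT : ∀ q, S8.T q = (q.1 * f₁, q.1 * f₁ * g + q.2 * f₂) := fun q => rfl
  refine ⟨LinearMap.range S8.T, ?_, S8.finrank_T, ?_⟩
  · ext v
    simp only [SetLike.mem_coe, LinearMap.mem_range, Set.mem_ofPred_eq]
    constructor
    · rintro ⟨q, rfl⟩
      exact ⟨q.1 * f₁, Ideal.mem_span_singleton'.mpr ⟨q.1, rfl⟩,
        q.2 * f₂, Ideal.mem_span_singleton'.mpr ⟨q.2, rfl⟩, rfl⟩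
    · rintro ⟨c₁, h1, c₂, h2, rfl⟩
      obtain ⟨a, rfl⟩ := Ideal.mem_span_singleton'.mp h1
      obtain ⟨b, rfl⟩ := Ideal.mem_span_singleton'.mp h2
      exact ⟨(a, b), rfl⟩
  · intro c₁ h1 c₂ h2 hne
    obtain ⟨a, rfl⟩ := Ideal.mem_span_singleton'.mp h1
    obtain ⟨b, rfl⟩ := Ideal.mem_span_singleton'.mp h2
    exact S8.main_bound (by norm_num) (a, b) hne
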